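/- Existence of the stationary distribution for all arrival probabilities: suppose in addition to the standing assumptions that there exist m ≥ 1 and ρ ∈ [0,1) such that d(g^{∘m}(P₁), g^{∘m}(P₂)) ≤ ρ·d(P₁,P₂) for all positive definite symmetric P₁, P₂, and that g and h are nonexpansive for d. Then for every arrival probability γ̄ ∈ (0,1), the Markov operator T(ν) = γ̄·g_*ν + (1−γ̄)·h_*ν on Borel probability measures on the set of real n×n positive definite symmetric matrices has a unique invariant probability measure μ (T(μ) = μ), and for every initial Borel probability measure ν, the iterates T^k(ν) converge weakly (with respect to the standard topology on real matrices) to μ. -/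

import Mathlib

open Matrix

noncomputable def matEigs {n : ℕ} (M : Matrix (Fin n) (Fin n) ℝ) : Fin n → ℝ := by
  classical exact if h : M.IsHermitian then h.eigenvalues else 0

/-- The positive semidefinite square root of a positive semidefinite matrix, as
Mathlib used to define it. -/
noncomputable def Matrix.PosSemidef.sqrt {n : Type*} [Fintype n] [DecidableEq n]
    {A : Matrix n n ℝ} (hA : A.PosSemidef) : Matrix n n ℝ :=
  (hA.1.eigenvectorUnitary : Matrix n n ℝ) *
    Matrix.diagonal ((RCLike.ofReal : ℝ → ℝ) ∘ Real.sqrt ∘ hA.1.eigenvalues) *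
    (star hA.1.eigenvectorUnitary : Matrix n n ℝ)

noncomputable def matSqrt {n : ℕ} (M : Matrix (Fin n) (Fin n) ℝ) :
    Matrix (Fin n) (Fin n) ℝ := by
  classical exact if h : M.PosSemidef then h.sqrt else 0

/-- The natural (Fisher / affine-invariant) distance on positive definite
matrices: `d(P₁,P₂) = (∑ᵢ (log λᵢ)²)^{1/2}` where `λᵢ` are the eigenvalues of
`P₂^{-1/2} P₁ P₂^{-1/2}`. -/
noncomputable def natDist {n : ℕ} (P₁ P₂ : Matrix (Fin n) (Fin n) ℝ) : ℝ :=
  Real.sqrt (∑ i : Fin n,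
    Real.log (matEigs ((matSqrt P₂)⁻¹ * P₁ * (matSqrt P₂)⁻¹) i) ^ 2)

open MeasureTheory Filter

/-- Time-update Riccati map `h(P) = A P Aᵀ + Q`. -/
def riccatiH {n : ℕ} (A Q P : Matrix (Fin n) (Fin n) ℝ) :
    Matrix (Fin n) (Fin n) ℝ := A * P * Aᵀ + Q

/-- Measurement-update Riccati map `g(P) = ((A P Aᵀ + Q)⁻¹ + 𝓘)⁻¹`. -/
noncomputable def riccatiG {n : ℕ} (A Q I P : Matrix (Fin n) (Fin n) ℝ) :
    Matrix (Fin n) (Fin n) ℝ := ((A * P * Aᵀ + Q)⁻¹ + I)⁻¹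

lemma posDef_conjTranspose_mul_mul {n : ℕ} {B P : Matrix (Fin n) (Fin n) ℝ}
    (hB : IsUnit B.det) (hP : P.PosDef) : (Bᴴ * P * B).PosDef := by
  refine Matrix.PosDef.of_dotProduct_mulVec_pos
    (Matrix.isHermitian_conjTranspose_mul_mul B hP.1) fun x hx => ?_
  have hinj : Function.Injective B.mulVec :=
    Matrix.mulVec_injective_iff_isUnit.mpr ((Matrix.isUnit_iff_isUnit_det _).mpr hB)
  have hx' : B.mulVec x ≠ 0 := by
    intro h
    exact hx (hinj (by simpa using h))
  simpa only [star_mulVec, Matrix.dotProduct_mulVec, Matrix.vecMul_vecMul]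
    using hP.dotProduct_mulVec_pos hx'

lemma posDef_mul_mul_transpose {n : ℕ} {A P : Matrix (Fin n) (Fin n) ℝ}
    (hA : IsUnit A.det) (hP : P.PosDef) : (A * P * Aᵀ).PosDef := by
  have hAe : (Aᵀ)ᴴ = A := by
    ext i j
    simp [Matrix.conjTranspose_apply]
  have h := posDef_conjTranspose_mul_mul
    (B := Aᵀ) (by simpa [Matrix.det_transpose] using hA) hP
  rwa [hAe] at h

lemma riccatiH_posDef {n : ℕ} {A Q P : Matrix (Fin n) (Fin n) ℝ}
    (hA : IsUnit A.det) (hQ : Q.PosSemidef) (hP : P.PosDef) :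
    (riccatiH A Q P).PosDef :=
  (posDef_mul_mul_transpose hA hP).add_posSemidef hQ

lemma riccatiG_posDef {n : ℕ} {A Q I P : Matrix (Fin n) (Fin n) ℝ}
    (hA : IsUnit A.det) (hQ : Q.PosSemidef) (hI : I.PosSemidef) (hP : P.PosDef) :
    (riccatiG A Q I P).PosDef :=
  (((riccatiH_posDef hA hQ hP).inv).add_posSemidef hI).inv

/-- The space of real `n×n` positive definite (symmetric) matrices, as a
subtype of the matrices, with the subspace topology. -/
abbrev PDMatrix (n : ℕ) := {P : Matrix (Fin n) (Fin n) ℝ // P.PosDef}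

noncomputable instance {n : ℕ} : MeasurableSpace (Matrix (Fin n) (Fin n) ℝ) :=
  borel _

instance {n : ℕ} : BorelSpace (Matrix (Fin n) (Fin n) ℝ) := ⟨rfl⟩

/-- The measurement-update map `g` as a self-map of positive definite matrices. -/
noncomputable def riccatiGPD {n : ℕ} (A Q I : Matrix (Fin n) (Fin n) ℝ)
    (hA : IsUnit A.det) (hQ : Q.PosSemidef) (hI : I.PosSemidef)
    (P : PDMatrix n) : PDMatrix n :=
  ⟨riccatiG A Q I P.1, riccatiG_posDef hA hQ hI P.2⟩

/-- The time-update map `h` as a self-map of positive definite matrices. -/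
def riccatiHPD {n : ℕ} (A Q : Matrix (Fin n) (Fin n) ℝ)
    (hA : IsUnit A.det) (hQ : Q.PosSemidef)
    (P : PDMatrix n) : PDMatrix n :=
  ⟨riccatiH A Q P.1, riccatiH_posDef hA hQ P.2⟩

/-- The Markov operator of the LGB iterated function system:
`T(ν) = γ̄·g_*ν + (1−γ̄)·h_*ν`. -/
noncomputable def lgbMarkovOp {n : ℕ} (A Q I : Matrix (Fin n) (Fin n) ℝ)
    (hA : IsUnit A.det) (hQ : Q.PosSemidef) (hI : I.PosSemidef) (γ : ℝ)
    (ν : Measure (PDMatrix n)) : Measure (PDMatrix n) :=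
  ENNReal.ofReal γ • ν.map (riccatiGPD A Q I hA hQ hI) +
    ENNReal.ofReal (1 - γ) • ν.map (riccatiHPD A Q hA hQ)

/-!
The Markov operator on laws is adjoint to a transfer operator on bounded continuous observables.
Running two copies of the chain with the same random choices, `g` is used `m` times in a row with
probability `γ ^ m`, so the expected value of `d` shrinks at least by the factor
`1 - γ ^ m * (1 - ρ)` over `m` steps. For a metric dominated by a multiple of `d`, Lipschitz
observables along the orbit of a Dirac mass are therefore summably Cauchy; testing against capped
multiples of the distance shows that this orbit is tight, so by Prokhorov's theorem it converges
weakly. Its limit attracts every law because Lipschitz observables merge, and an attracting law is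
the unique fixed point.

Such a metric, proper and inducing the subspace topology, is pulled back from a finite-dimensional
space by the logarithms of the quadratic form on the vectors `eᵢ + eⱼ` and of the determinant: each
changes by at most a multiple of `d(P, R)` because `exp(-d(P, R)) R ≤ P ≤ exp(d(P, R)) R`.
-/

section WeakConvergence

open scoped BoundedContinuousFunction NNReal ENNReal Topology

variable {X : Type*} [MetricSpace X] [MeasurableSpace X]

lemma tendsto_probabilityMeasure_of_forall_lipschitz [OpensMeasurableSpace X]
    {P : ℕ → ProbabilityMeasure X} {μ : ProbabilityMeasure X}
    (h : ∀ (φ : X →ᵇ ℝ) (L : ℝ≥0), LipschitzWith L φ →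
      Tendsto (fun k => ∫ x, φ x ∂(P k : Measure X)) atTop (𝓝 (∫ x, φ x ∂(μ : Measure X)))) :
    Tendsto P atTop (𝓝 μ) := by
  refine tendsto_iff_forall_lipschitz_integral_tendsto.2 ?_
  rintro φ ⟨C, hC⟩ ⟨L, hL⟩
  exact h (.mkOfBound ⟨φ, hL.continuous⟩ C hC) L hL

lemma exists_tendsto_of_isTightMeasureSet_of_cauchySeq_integral [BorelSpace X]
    {P : ℕ → ProbabilityMeasure X}
    (htight : IsTightMeasureSet {(μ : Measure X) | μ ∈ Set.range P})
    (hcauchy : ∀ (φ : X →ᵇ ℝ) (L : ℝ≥0), LipschitzWith L φ →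
      CauchySeq fun k => ∫ x, φ x ∂(P k : Measure X)) :
    ∃ μ, Tendsto P atTop (𝓝 μ) := by
  obtain ⟨μ, -, hμ⟩ :=
    (isCompact_closure_of_isTightMeasureSet htight).exists_mapClusterPt (f := atTop) (u := P)
      (tendsto_principal.2 (.of_forall fun k => subset_closure ⟨k, rfl⟩))
  refine ⟨μ, tendsto_probabilityMeasure_of_forall_lipschitz fun φ L hφ => ?_⟩
  exact le_nhds_of_cauchy_adhp (hcauchy φ L hφ) <| hμ.continuousAt_comp
    (ProbabilityMeasure.continuous_integral_boundedContinuousFunction φ).continuousAt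

/-- The distance to `x₀` scaled by `K` and capped at `1`: a bounded `K`-Lipschitz majorant of the
indicator of the complement of the ball of radius `1 / K`. -/
noncomputable def cappedDist {X : Type*} [MetricSpace X] (x₀ : X) (K : ℝ≥0) : X →ᵇ ℝ :=
  .mkOfBound ⟨fun x => min (K * dist x x₀) 1, by fun_prop⟩ 1 fun _ _ =>
    Real.dist_le_of_mem_Icc_01 ⟨le_min (by positivity) zero_le_one, min_le_right _ _⟩
      ⟨le_min (by positivity) zero_le_one, min_le_right _ _⟩

lemma cappedDist_self {X : Type*} [MetricSpace X] (x₀ : X) (K : ℝ≥0) : cappedDist x₀ K x₀ = 0 := by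
  simp [cappedDist]

lemma lipschitzWith_cappedDist {X : Type*} [MetricSpace X] (x₀ : X) (K : ℝ≥0) :
    LipschitzWith K (cappedDist x₀ K) := by
  refine LipschitzWith.min_const (.of_dist_le_mul fun x y => ?_) 1
  rw [Real.dist_eq, ← mul_sub, abs_mul, NNReal.abs_eq]
  exact mul_le_mul_of_nonneg_left (abs_dist_sub_le x y x₀) K.2

lemma measure_compl_closedBall_le_of_integral_cappedDist_le [OpensMeasurableSpace X]
    (μ : Measure X) [IsProbabilityMeasure μ] (x₀ : X) {r : ℝ≥0} (hr : 0 < r) {c : ℝ}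
    (h : ∫ x, cappedDist x₀ r⁻¹ x ∂μ ≤ c) :
    μ (Metric.closedBall x₀ r)ᶜ ≤ ENNReal.ofReal c := by
  have hsub : (Metric.closedBall x₀ r)ᶜ ⊆ {x | 1 ≤ cappedDist x₀ r⁻¹ x} := fun x hx => by
    rw [Set.mem_compl_iff, Metric.mem_closedBall, not_le] at hx
    refine Set.mem_ofPred.2 (le_min ?_ le_rfl)
    rw [NNReal.coe_inv, inv_mul_eq_div, one_le_div (by exact_mod_cast hr)]
    exact hx.le
  have hmarkov := mul_meas_ge_le_integral_of_nonneg (μ := μ) (f := cappedDist x₀ r⁻¹)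
    (.of_forall fun x => le_min (by positivity) zero_le_one)
    ((cappedDist x₀ r⁻¹).integrable μ) 1
  rw [one_mul] at hmarkov
  rw [← ofReal_measureReal]
  exact ENNReal.ofReal_le_ofReal ((measureReal_mono hsub).trans (hmarkov.trans h))

lemma isTightMeasureSet_of_integral_cappedDist_le [OpensMeasurableSpace X] [ProperSpace X]
    {S : Set (Measure X)} (hS : ∀ μ ∈ S, IsProbabilityMeasure μ) (x₀ : X) (B : ℝ)
    (h : ∀ μ ∈ S, ∀ K : ℝ≥0, ∫ x, cappedDist x₀ K x ∂μ ≤ K * B) :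
    IsTightMeasureSet S := by
  refine isTightMeasureSet_of_tendsto_measure_compl_closedBall (x := x₀) ?_
  have hlim : Tendsto (fun r : ℝ => ENNReal.ofReal (r⁻¹ * B)) atTop (𝓝 0) := by
    simpa using ENNReal.tendsto_ofReal (tendsto_inv_atTop_zero.mul_const B)
  refine tendsto_of_tendsto_of_tendsto_of_le_of_le' tendsto_const_nhds hlim
    (.of_forall fun _ => zero_le) ?_
  filter_upwards [eventually_gt_atTop 0] with r hr
  refine iSup₂_le fun μ hμ => ?_
  have := hS μ hμ
  exact measure_compl_closedBall_le_of_integral_cappedDist_le μ x₀ (r := ⟨r, hr.le⟩) hr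
    (h μ hμ (⟨r, hr.le⟩ : ℝ≥0)⁻¹)

end WeakConvergence

open scoped BoundedContinuousFunction Topology NNReal in
/-- `T`, acting on laws, and `U`, acting on observables, are adjoint for the integration pairing.
For a Markov chain with the Feller property this relates the evolution of laws to the
transition operator. -/
def IsMarkovDual {X : Type*} [MeasurableSpace X] [TopologicalSpace X] [OpensMeasurableSpace X]
    (T : ProbabilityMeasure X → ProbabilityMeasure X) (U : (X →ᵇ ℝ) → (X →ᵇ ℝ)) : Prop :=
  ∀ ν φ, ∫ x, φ x ∂(T ν : Measure X) = ∫ x, U φ x ∂(ν : Measure X)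

namespace IsMarkovDual

open scoped BoundedContinuousFunction NNReal Topology

section Topological

variable {X : Type*} [MeasurableSpace X] [TopologicalSpace X] [OpensMeasurableSpace X]
  {T : ProbabilityMeasure X → ProbabilityMeasure X} {U : (X →ᵇ ℝ) → (X →ᵇ ℝ)}

lemma iterate (hTU : IsMarkovDual T U) (k : ℕ) : IsMarkovDual T^[k] U^[k] := by
  induction k with
  | zero => exact fun _ _ => rfl
  | succ k ih =>
    intro ν φ
    rw [Function.iterate_succ_apply', hTU, ih, Function.iterate_succ_apply]

lemma continuous (hTU : IsMarkovDual T U) : Continuous T :=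
  ProbabilityMeasure.continuous_iff_forall_continuous_integral.2 fun φ => by
    simpa only [hTU _ φ] using
      ProbabilityMeasure.continuous_integral_boundedContinuousFunction (U φ)

lemma integral_diracProba (hTU : IsMarkovDual T U) (φ : X →ᵇ ℝ) (x : X) :
    ∫ y, φ y ∂(T (diracProba x) : Measure X) = U φ x := by
  rw [hTU]
  exact integral_dirac' _ _ (U φ).continuous.stronglyMeasurable

lemma norm_apply_le (hTU : IsMarkovDual T U) (φ : X →ᵇ ℝ) (x : X) : ‖U φ x‖ ≤ ‖φ‖ :=
  hTU.integral_diracProba φ x ▸ φ.norm_integral_le_norm _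

lemma isFixedPt_and_unique_of_tendsto_iterate [HasOuterApproxClosed X] [BorelSpace X]
    (hTU : IsMarkovDual T U) {μ : ProbabilityMeasure X}
    (hμ : ∀ ν, Tendsto (fun k => T^[k] ν) atTop (𝓝 μ)) :
    Function.IsFixedPt T μ ∧ ∀ ν, Function.IsFixedPt T ν → ν = μ := by
  refine ⟨isFixedPt_of_tendsto_iterate (hμ μ) hTU.continuous.continuousAt, fun ν hν => ?_⟩
  refine tendsto_nhds_unique ?_ (hμ ν)
  simpa only [hν.iterate _ |>.eq] using tendsto_const_nhds

end Topological

section Metric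

variable {X : Type*} [MetricSpace X] [MeasurableSpace X]
  {T : ProbabilityMeasure X → ProbabilityMeasure X} {U : (X →ᵇ ℝ) → (X →ᵇ ℝ)}

lemma exists_tendsto_iterate_diracProba [ProperSpace X] [BorelSpace X] (hTU : IsMarkovDual T U)
    (x₀ : X) {a : ℕ → ℝ} (ha : Summable a)
    (hstep : ∀ (φ : X →ᵇ ℝ) (L : ℝ≥0), LipschitzWith L φ →
      ∀ k, dist (U^[k] φ x₀) (U^[k + 1] φ x₀) ≤ L * a k) :
    ∃ μ, Tendsto (fun k => T^[k] (diracProba x₀)) atTop (𝓝 μ) := by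
  have hint (φ : X →ᵇ ℝ) (k : ℕ) :
      ∫ x, φ x ∂(T^[k] (diracProba x₀) : Measure X) = U^[k] φ x₀ :=
    (hTU.iterate k).integral_diracProba φ x₀
  refine exists_tendsto_of_isTightMeasureSet_of_cauchySeq_integral ?_ fun φ L hφ => ?_
  · obtain ⟨B, hB⟩ := ha.hasSum.tendsto_sum_nat.bddAbove_range
    refine isTightMeasureSet_of_integral_cappedDist_le ?_ x₀ B ?_
    · rintro _ ⟨μ, -, rfl⟩
      infer_instance
    · rintro _ ⟨_, ⟨k, rfl⟩, rfl⟩ K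
      set ψ := cappedDist x₀ K
      calc ∫ x, ψ x ∂(T^[k] (diracProba x₀) : Measure X) = U^[k] ψ x₀ - ψ x₀ := by
            rw [hint, cappedDist_self, sub_zero]
        _ ≤ dist (U^[0] ψ x₀) (U^[k] ψ x₀) := by
            rw [dist_comm]; exact le_abs_self _
        _ ≤ ∑ i ∈ Finset.range k, K * a i :=
            dist_le_range_sum_of_dist_le (f := fun i => U^[i] ψ x₀) k fun _ =>
              hstep ψ K (lipschitzWith_cappedDist x₀ K) _
        _ ≤ K * B := by
            rw [← Finset.mul_sum]
            exact mul_le_mul_of_nonneg_left (hB ⟨k, rfl⟩) K.2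
  · simp only [hint]
    exact cauchySeq_of_dist_le_of_summable _ (hstep φ L hφ) (ha.mul_left _)

lemma tendsto_iterate_of_merging [OpensMeasurableSpace X] (hTU : IsMarkovDual T U) {x₀ : X}
    {μ : ProbabilityMeasure X} (hμ : Tendsto (fun k => T^[k] (diracProba x₀)) atTop (𝓝 μ))
    (hmerge : ∀ (φ : X →ᵇ ℝ) (L : ℝ≥0), LipschitzWith L φ →
      ∀ x, Tendsto (fun k => U^[k] φ x - U^[k] φ x₀) atTop (𝓝 0))
    (ν : ProbabilityMeasure X) : Tendsto (fun k => T^[k] ν) atTop (𝓝 μ) := by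
  refine tendsto_probabilityMeasure_of_forall_lipschitz fun φ L hφ => ?_
  have hdirac := ProbabilityMeasure.tendsto_iff_forall_integral_tendsto.1 hμ φ
  simp only [(hTU.iterate _).integral_diracProba, (hTU.iterate _) ν φ] at hdirac ⊢
  have hbound (k : ℕ) (x : X) : ‖U^[k] φ x - U^[k] φ x₀‖ ≤ 2 * ‖φ‖ := by
    linarith [norm_sub_le (U^[k] φ x) (U^[k] φ x₀), (hTU.iterate k).norm_apply_le φ x,
      (hTU.iterate k).norm_apply_le φ x₀]
  have hdiff : Tendsto (fun k => ∫ x, (U^[k] φ x - U^[k] φ x₀) ∂(ν : Measure X)) atTop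
      (𝓝 (∫ _, 0 ∂(ν : Measure X))) :=
    tendsto_integral_of_dominated_convergence _
      (fun k => ((U^[k] φ).continuous.sub continuous_const).aestronglyMeasurable)
      (integrable_const (2 * ‖φ‖)) (fun k => .of_forall (hbound k))
      (.of_forall (hmerge φ L hφ))
  simpa [integral_sub ((U^[_] φ).integrable _) (integrable_const _)] using hdiff.add hdirac

end Metric

end IsMarkovDual

section IteratedFunctionSystem

open scoped BoundedContinuousFunction NNReal Topology

variable {ι : Type*} [Fintype ι] {p : ι → ℝ}

lemma dist_sum_mul_le (hp : ∀ i, 0 ≤ p i) (a b : ι → ℝ) :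
    dist (∑ i, p i * a i) (∑ i, p i * b i) ≤ ∑ i, p i * dist (a i) (b i) := by
  refine (dist_sum_sum_le _ _ _).trans_eq (Finset.sum_congr rfl fun i _ => ?_)
  rw [Real.dist_eq, ← mul_sub, abs_mul, abs_of_nonneg (hp i), Real.dist_eq]

section Average

variable {Z : Type*} {F : ι → Z → Z} {V : Z → ℝ}

/-- The expectation of the observable `φ` after one random step of the iterated function system
`F`, the map `F i` being chosen with probability `p i`. -/
def ifsAverage (p : ι → ℝ) (F : ι → Z → Z) (φ : Z → ℝ) : Z → ℝ :=
  fun z => ∑ i, p i * φ (F i z)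

lemma monotone_ifsAverage (hp : ∀ i, 0 ≤ p i) : Monotone (ifsAverage p F) :=
  fun _ _ h z => Finset.sum_le_sum fun i _ => mul_le_mul_of_nonneg_left (h (F i z)) (hp i)

lemma commute_ifsAverage_smul (p : ι → ℝ) (F : ι → Z → Z) (c : ℝ) :
    Function.Commute (ifsAverage p F) (c • ·) := fun φ => by
  ext z
  simp only [ifsAverage, Pi.smul_apply, smul_eq_mul, Finset.mul_sum, mul_left_comm]

lemma ifsAverage_apply_le (hp : p ∈ stdSimplex ℝ ι) {z : Z} {c : ℝ} (hV : ∀ i, V (F i z) ≤ c)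
    (i₀ : ι) : ifsAverage p F V z ≤ p i₀ * V (F i₀ z) + (1 - p i₀) * c := by
  classical
  calc ifsAverage p F V z
      = p i₀ * V (F i₀ z) + ∑ i ∈ Finset.univ.erase i₀, p i * V (F i z) :=
        (Finset.add_sum_erase _ _ (Finset.mem_univ i₀)).symm
    _ ≤ p i₀ * V (F i₀ z) + ∑ i ∈ Finset.univ.erase i₀, p i * c := by
        gcongr with i
        · exact hp.1 i
        · exact hV i
    _ = p i₀ * V (F i₀ z) + (1 - p i₀) * c := by
        rw [← Finset.sum_mul, ← hp.2, ← Finset.add_sum_erase _ _ (Finset.mem_univ i₀),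
          add_sub_cancel_left]

lemma antitone_iterate_ifsAverage (hp : p ∈ stdSimplex ℝ ι) (hV : ∀ i z, V (F i z) ≤ V z) :
    Antitone fun k => (ifsAverage p F)^[k] V := by
  refine (monotone_ifsAverage hp.1).antitone_iterate_of_map_le fun z => ?_
  calc ifsAverage p F V z ≤ ∑ i, p i * V z :=
        Finset.sum_le_sum fun i _ => mul_le_mul_of_nonneg_left (hV i z) (hp.1 i)
    _ = V z := by rw [← Finset.sum_mul, hp.2, one_mul]

-- With probability `p i₀ ^ k` the first `k` steps all use `F i₀`.
lemma iterate_ifsAverage_apply_le (hp : p ∈ stdSimplex ℝ ι) (hV : ∀ i z, V (F i z) ≤ V z)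
    (i₀ : ι) (k : ℕ) (z : Z) :
    (ifsAverage p F)^[k] V z ≤ p i₀ ^ k * V ((F i₀)^[k] z) + (1 - p i₀ ^ k) * V z := by
  have hp_le_one : p i₀ ≤ 1 := (mem_Icc_of_mem_stdSimplex hp i₀).2
  induction k generalizing z with
  | zero => simp
  | succ k ih =>
    have hle (i : ι) : (ifsAverage p F)^[k] V (F i z) ≤ V z :=
      (antitone_iterate_ifsAverage hp hV k.zero_le (F i z)).trans (hV i z)
    have hpow : 0 ≤ 1 - p i₀ ^ k := sub_nonneg.2 (pow_le_one₀ (hp.1 i₀) hp_le_one)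
    rw [Function.iterate_succ_apply']
    calc ifsAverage p F ((ifsAverage p F)^[k] V) z
        ≤ p i₀ * (ifsAverage p F)^[k] V (F i₀ z) + (1 - p i₀) * V z :=
          ifsAverage_apply_le hp hle i₀
      _ ≤ p i₀ * (p i₀ ^ k * V ((F i₀)^[k] (F i₀ z)) + (1 - p i₀ ^ k) * V z)
          + (1 - p i₀) * V z := by
          gcongr
          · exact hp.1 i₀
          · refine (ih (F i₀ z)).trans ?_
            gcongr
            exact hV i₀ z
      _ = p i₀ ^ (k + 1) * V ((F i₀)^[k + 1] z) + (1 - p i₀ ^ (k + 1)) * V z := by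
          rw [Function.iterate_succ_apply]
          ring

lemma iterate_ifsAverage_le_pow_div_smul (hp : p ∈ stdSimplex ℝ ι)
    (hV : ∀ i z, V (F i z) ≤ V z) (i₀ : ι) {m : ℕ} {ρ : ℝ} (hρ₀ : 0 ≤ ρ)
    (hcontr : ∀ z, V ((F i₀)^[m] z) ≤ ρ * V z) (k : ℕ) :
    (ifsAverage p F)^[k] V ≤ (1 - p i₀ ^ m * (1 - ρ)) ^ (k / m) • V := by
  set q := 1 - p i₀ ^ m * (1 - ρ)
  have hpow : 0 ≤ p i₀ ^ m := pow_nonneg (hp.1 i₀) m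
  have hpow_le_one : p i₀ ^ m ≤ 1 := pow_le_one₀ (hp.1 i₀) (mem_Icc_of_mem_stdSimplex hp i₀).2
  have hq : 0 ≤ q := by simp only [q]; nlinarith
  have hblock : (ifsAverage p F)^[m] V ≤ q • V := fun z =>
    calc (ifsAverage p F)^[m] V z ≤ p i₀ ^ m * V ((F i₀)^[m] z) + (1 - p i₀ ^ m) * V z :=
          iterate_ifsAverage_apply_le hp hV i₀ m z
      _ ≤ p i₀ ^ m * (ρ * V z) + (1 - p i₀ ^ m) * V z := by gcongr; exact hcontr z
      _ = q * V z := by ring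
  have hblocks (j : ℕ) : (ifsAverage p F)^[m * j] V ≤ q ^ j • V := by
    induction j with
    | zero => simp
    | succ j ih =>
      rw [Nat.mul_succ, Function.iterate_add_apply]
      calc (ifsAverage p F)^[m * j] ((ifsAverage p F)^[m] V)
          ≤ (ifsAverage p F)^[m * j] (q • V) := (monotone_ifsAverage hp.1).iterate _ hblock
        _ = q • (ifsAverage p F)^[m * j] V := (commute_ifsAverage_smul p F q).iterate_left _ V
        _ ≤ q • q ^ j • V := smul_le_smul_of_nonneg_left ih hq
        _ = q ^ (j + 1) • V := by rw [smul_smul, pow_succ']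
  exact (antitone_iterate_ifsAverage hp hV (Nat.mul_div_le k m)).trans (hblocks (k / m))

end Average

lemma summable_pow_div {q : ℝ} (hq₀ : 0 ≤ q) (hq₁ : q < 1) {m : ℕ} (hm : m ≠ 0) :
    Summable fun k : ℕ => q ^ (k / m) := by
  have : NeZero m := ⟨hm⟩
  have hprod : Summable fun jr : ℕ × Fin m => q ^ jr.1 * 1 :=
    (summable_geometric_of_lt_one hq₀ hq₁).mul_of_nonneg (g := fun _ : Fin m => 1)
      .of_finite (fun j => pow_nonneg hq₀ j) (fun _ => zero_le_one)
  simpa [Function.comp_def, Nat.divModEquiv] using (Nat.divModEquiv m).summable_iff.2 hprod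

section Transfer

variable {X : Type*} [TopologicalSpace X] [MeasurableSpace X]

/-- The transition operator on observables of the iterated function system `f` with
place-independent probabilities `p`. -/
noncomputable def ifsTransfer {X : Type*} [TopologicalSpace X] (p : ι → ℝ) (f : ι → C(X, X))
    (φ : X →ᵇ ℝ) : X →ᵇ ℝ :=
  ∑ i, p i • φ.compContinuous (f i)

lemma ifsTransfer_apply {X : Type*} [TopologicalSpace X] (p : ι → ℝ) (f : ι → C(X, X))
    (φ : X →ᵇ ℝ) (x : X) : ifsTransfer p f φ x = ∑ i, p i * φ (f i x) := by
  simp [ifsTransfer, BoundedContinuousFunction.sum_apply]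

lemma isProbabilityMeasure_sum_smul_map [BorelSpace X] (hp : p ∈ stdSimplex ℝ ι)
    (f : ι → C(X, X)) (ν : ProbabilityMeasure X) :
    IsProbabilityMeasure (∑ i, ENNReal.ofReal (p i) • (ν : Measure X).map (f i)) := by
  have hprob (i : ι) : IsProbabilityMeasure ((ν : Measure X).map (f i)) :=
    Measure.isProbabilityMeasure_map (f i).continuous.aemeasurable
  constructor
  simp [Measure.finsetSum_apply, ← ENNReal.ofReal_sum_of_nonneg fun i _ => hp.1 i, hp.2]

/-- The Markov operator on laws of the iterated function system `f` with place-independent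
probabilities `p`. -/
noncomputable def ifsMarkovOp [BorelSpace X] (hp : p ∈ stdSimplex ℝ ι) (f : ι → C(X, X))
    (ν : ProbabilityMeasure X) : ProbabilityMeasure X :=
  ⟨∑ i, ENNReal.ofReal (p i) • (ν : Measure X).map (f i),
    isProbabilityMeasure_sum_smul_map hp f ν⟩

lemma isMarkovDual_ifs [BorelSpace X] (hp : p ∈ stdSimplex ℝ ι) (f : ι → C(X, X)) :
    IsMarkovDual (ifsMarkovOp hp f) (ifsTransfer p f) := fun ν φ => by
  have hmap (i : ι) : Integrable φ ((ν : Measure X).map (f i)) := by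
    have := Measure.isProbabilityMeasure_map (μ := (ν : Measure X)) (f i).continuous.aemeasurable
    exact φ.integrable _
  calc ∫ x, φ x ∂(ifsMarkovOp hp f ν : Measure X)
      = ∑ i, ∫ x, φ x ∂(ENNReal.ofReal (p i) • (ν : Measure X).map (f i)) :=
        integral_finsetSum_measure fun i _ => (hmap i).smul_measure ENNReal.ofReal_ne_top
    _ = ∑ i, ∫ x, p i * φ (f i x) ∂(ν : Measure X) := by
        refine Finset.sum_congr rfl fun i _ => ?_
        rw [integral_smul_measure, ENNReal.toReal_ofReal (hp.1 i), integral_const_mul,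
          integral_map (f i).continuous.aemeasurable φ.continuous.aestronglyMeasurable,
          smul_eq_mul]
    _ = ∫ x, ifsTransfer p f φ x ∂(ν : Measure X) := by
        simp only [ifsTransfer_apply]
        exact (integral_finsetSum _ fun i _ =>
          ((φ.compContinuous (f i)).integrable _).const_mul _).symm

lemma dist_ifsTransfer_self_le {X : Type*} [TopologicalSpace X] (hp : p ∈ stdSimplex ℝ ι)
    (f : ι → C(X, X)) (φ : X →ᵇ ℝ) (x : X) :
    dist (φ x) (ifsTransfer p f φ x) ≤ ∑ i, p i * dist (φ x) (φ (f i x)) := by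
  have hφ : φ x = ∑ i, p i * φ x := by rw [← Finset.sum_mul, hp.2, one_mul]
  rw [ifsTransfer_apply]
  nth_rewrite 1 [hφ]
  exact dist_sum_mul_le hp.1 _ _

-- Synchronous coupling: the same random map is applied to both starting points.
lemma dist_iterate_ifsTransfer_le {X : Type*} [TopologicalSpace X] (hp : ∀ i, 0 ≤ p i)
    (f : ι → C(X, X)) (φ : X →ᵇ ℝ) (k : ℕ) :
    (fun z : X × X => dist ((ifsTransfer p f)^[k] φ z.1) ((ifsTransfer p f)^[k] φ z.2)) ≤
      (ifsAverage p fun i => Prod.map (f i) (f i))^[k] fun z => dist (φ z.1) (φ z.2) := by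
  induction k with
  | zero => rfl
  | succ k ih =>
    rw [Function.iterate_succ_apply', Function.iterate_succ_apply']
    refine le_trans (fun z => ?_) (monotone_ifsAverage hp ih)
    simp only [ifsTransfer_apply]
    exact dist_sum_mul_le hp _ _

end Transfer

lemma dist_iterate_ifsTransfer_le_pow_div_mul {X : Type*} [PseudoMetricSpace X]
    (hp : p ∈ stdSimplex ℝ ι) (f : ι → C(X, X)) {c : X → X → ℝ} {K : ℝ≥0}
    (hdist : ∀ x y, dist x y ≤ K * c x y) (hc : ∀ i x y, c (f i x) (f i y) ≤ c x y)
    (i₀ : ι) {m : ℕ} {ρ : ℝ} (hρ₀ : 0 ≤ ρ)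
    (hcontr : ∀ x y, c ((f i₀)^[m] x) ((f i₀)^[m] y) ≤ ρ * c x y)
    {φ : X →ᵇ ℝ} {L : ℝ≥0} (hφ : LipschitzWith L φ) (k : ℕ) (x y : X) :
    dist ((ifsTransfer p f)^[k] φ x) ((ifsTransfer p f)^[k] φ y) ≤
      L * ((1 - p i₀ ^ m * (1 - ρ)) ^ (k / m) * (K * c x y)) := by
  set V : X × X → ℝ := fun z => K * c z.1 z.2
  have hφV : (fun z : X × X => dist (φ z.1) (φ z.2)) ≤ (L : ℝ) • V := fun z =>
    (hφ.dist_le_mul z.1 z.2).trans (mul_le_mul_of_nonneg_left (hdist z.1 z.2) L.2)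
  have hV (i : ι) (z : X × X) : V (Prod.map (f i) (f i) z) ≤ V z :=
    mul_le_mul_of_nonneg_left (hc i z.1 z.2) K.2
  have hVcontr (z : X × X) : V ((Prod.map (f i₀) (f i₀))^[m] z) ≤ ρ * V z := by
    simp only [V, Prod.map_iterate, Prod.map_fst, Prod.map_snd, mul_left_comm ρ]
    exact mul_le_mul_of_nonneg_left (hcontr z.1 z.2) K.2
  let N := ifsAverage p fun i => Prod.map (f i) (f i)
  calc dist ((ifsTransfer p f)^[k] φ x) ((ifsTransfer p f)^[k] φ y)
      ≤ N^[k] (fun z => dist (φ z.1) (φ z.2)) (x, y) :=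
        dist_iterate_ifsTransfer_le hp.1 f φ k (x, y)
    _ ≤ N^[k] ((L : ℝ) • V) (x, y) := (monotone_ifsAverage hp.1).iterate k hφV (x, y)
    _ = L * N^[k] V (x, y) := by rw [(commute_ifsAverage_smul p _ _).iterate_left k V]; rfl
    _ ≤ L * ((1 - p i₀ ^ m * (1 - ρ)) ^ (k / m) * (K * c x y)) :=
        mul_le_mul_of_nonneg_left
          (iterate_ifsAverage_le_pow_div_smul hp hV i₀ hρ₀ hVcontr k (x, y)) L.2

theorem exists_unique_attracting_isFixedPt_ifsMarkovOp {X : Type*} [MetricSpace X] [ProperSpace X]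
    [Nonempty X] [MeasurableSpace X] [BorelSpace X] (hp : p ∈ stdSimplex ℝ ι) (f : ι → C(X, X))
    {c : X → X → ℝ} {K : ℝ≥0} (hdist : ∀ x y, dist x y ≤ K * c x y)
    (hc : ∀ i x y, c (f i x) (f i y) ≤ c x y) {i₀ : ι} (hi₀ : 0 < p i₀) {m : ℕ} (hm : m ≠ 0)
    {ρ : ℝ} (hρ₀ : 0 ≤ ρ) (hρ₁ : ρ < 1)
    (hcontr : ∀ x y, c ((f i₀)^[m] x) ((f i₀)^[m] y) ≤ ρ * c x y) :
    ∃ μ, Function.IsFixedPt (ifsMarkovOp hp f) μ ∧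
      (∀ ν, Function.IsFixedPt (ifsMarkovOp hp f) ν → ν = μ) ∧
      ∀ ν, Tendsto (fun k => (ifsMarkovOp hp f)^[k] ν) atTop (𝓝 μ) := by
  obtain ⟨x₀⟩ := ‹Nonempty X›
  set q := 1 - p i₀ ^ m * (1 - ρ)
  have hpow : 0 < p i₀ ^ m := pow_pos hi₀ m
  have hpow_le_one : p i₀ ^ m ≤ 1 := pow_le_one₀ hi₀.le (mem_Icc_of_mem_stdSimplex hp i₀).2
  have hq : Summable fun k : ℕ => q ^ (k / m) :=
    summable_pow_div (by simp only [q]; nlinarith) (by simp only [q]; nlinarith) hm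
  have hdecay {φ : X →ᵇ ℝ} {L : ℝ≥0} (hφ : LipschitzWith L φ) (k : ℕ) (x y : X) :
      dist ((ifsTransfer p f)^[k] φ x) ((ifsTransfer p f)^[k] φ y) ≤
        L * (q ^ (k / m) * (K * c x y)) :=
    dist_iterate_ifsTransfer_le_pow_div_mul hp f hdist hc i₀ hρ₀ hcontr hφ k x y
  have hdual := isMarkovDual_ifs hp f
  obtain ⟨μ, hμ⟩ := hdual.exists_tendsto_iterate_diracProba x₀
    (hq.mul_right (∑ i, p i * (K * c x₀ (f i x₀)))) fun φ L hφ k => by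
      rw [Function.iterate_succ_apply']
      refine (dist_ifsTransfer_self_le hp f _ x₀).trans ?_
      rw [Finset.mul_sum, Finset.mul_sum]
      refine Finset.sum_le_sum fun i _ => ?_
      rw [mul_left_comm (q ^ _), mul_left_comm (L : ℝ)]
      exact mul_le_mul_of_nonneg_left (hdecay hφ k x₀ (f i x₀)) (hp.1 i)
  have hattract := hdual.tendsto_iterate_of_merging hμ fun φ L hφ x =>
    squeeze_zero_norm (fun k => hdecay hφ k x x₀) <| by
      simpa using (hq.tendsto_atTop_zero.mul_const (K * c x x₀)).const_mul (L : ℝ)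
  obtain ⟨hfix, hunique⟩ := hdual.isFixedPt_and_unique_of_tendsto_iterate hattract
  exact ⟨μ, hfix, hunique, hattract⟩

end IteratedFunctionSystem

section NatDist

open scoped MatrixOrder

variable {n : ℕ} {P R : Matrix (Fin n) (Fin n) ℝ}

lemma matSqrt_eq_conjStarAlgAut (hR : R.PosSemidef) :
    matSqrt R = Unitary.conjStarAlgAut ℝ _ hR.1.eigenvectorUnitary
      (diagonal fun i => √(hR.1.eigenvalues i)) := by
  rw [matSqrt, dif_pos hR]
  rfl

lemma isHermitian_matSqrt (hR : R.PosSemidef) : (matSqrt R).IsHermitian := by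
  rw [matSqrt_eq_conjStarAlgAut hR, IsHermitian, ← star_eq_conjTranspose, ← map_star,
    star_eq_conjTranspose, diagonal_conjTranspose, star_trivial]

lemma matSqrt_mul_matSqrt (hR : R.PosSemidef) : matSqrt R * matSqrt R = R := by
  rw [matSqrt_eq_conjStarAlgAut hR, ← map_mul, diagonal_mul_diagonal]
  simp only [Real.mul_self_sqrt (hR.eigenvalues_nonneg _)]
  exact hR.1.spectral_theorem.symm

lemma isUnit_matSqrt (hR : R.PosDef) : IsUnit (matSqrt R) := by
  have hsq : IsUnit (matSqrt R * matSqrt R) := by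
    rw [matSqrt_mul_matSqrt hR.posSemidef]
    exact hR.isUnit
  exact isUnit_of_mul_isUnit_left hsq

lemma posDef_inv_matSqrt_mul_mul_inv_matSqrt (hP : P.PosDef) (hR : R.PosDef) :
    ((matSqrt R)⁻¹ * P * (matSqrt R)⁻¹).PosDef := by
  have hunit := (isUnit_iff_isUnit_det _).1 (isUnit_matSqrt hR)
  have hherm := (isHermitian_matSqrt hR.posSemidef).inv.eq
  simpa only [hherm] using posDef_conjTranspose_mul_mul (isUnit_nonsing_inv_det _ hunit) hP

lemma abs_log_eigenvalues_le_natDist (hP : P.PosDef) (hR : R.PosDef) (i : Fin n) :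
    |Real.log ((posDef_inv_matSqrt_mul_mul_inv_matSqrt hP hR).1.eigenvalues i)| ≤ natDist P R := by
  rw [natDist, matEigs, dif_pos (posDef_inv_matSqrt_mul_mul_inv_matSqrt hP hR).1]
  exact Real.abs_le_sqrt
    (Finset.single_le_sum (fun j _ => sq_nonneg (Real.log _)) (Finset.mem_univ i))

lemma exp_neg_smul_le_and_le_exp_smul_of_natDist (hP : P.PosDef) (hR : R.PosDef) :
    Real.exp (-natDist P R) • R ≤ P ∧ P ≤ Real.exp (natDist P R) • R := by
  set S := matSqrt R
  have hM := posDef_inv_matSqrt_mul_mul_inv_matSqrt hP hR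
  set M := S⁻¹ * P * S⁻¹
  have hS : star S = S := isHermitian_matSqrt hR.posSemidef
  have hdet : IsUnit S.det := (isUnit_iff_isUnit_det _).1 (isUnit_matSqrt hR)
  have hSMS : S * M * S = P := by
    simp only [M, ← Matrix.mul_assoc, mul_nonsing_inv S hdet, Matrix.one_mul]
    rw [Matrix.mul_assoc, nonsing_inv_mul S hdet, Matrix.mul_one]
  have hSS (c : ℝ) : S * algebraMap ℝ _ c * S = c • R := by
    rw [Algebra.algebraMap_eq_smul_one, mul_smul_comm, mul_one, smul_mul_assoc,
      matSqrt_mul_matSqrt hR.posSemidef]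
  have hbounds (i : Fin n) := abs_le.1 (abs_log_eigenvalues_le_natDist hP hR i)
  have hlower : algebraMap ℝ _ (Real.exp (-natDist P R)) ≤ M := by
    refine algebraMap_le_of_le_spectrum (fun x hx => ?_) hM.1
    rw [hM.1.spectrum_real_eq_range_eigenvalues] at hx
    obtain ⟨i, rfl⟩ := hx
    exact (Real.le_log_iff_exp_le (hM.eigenvalues_pos i)).1 (hbounds i).1
  have hupper : M ≤ algebraMap ℝ _ (Real.exp (natDist P R)) := by
    refine le_algebraMap_of_spectrum_le (fun x hx => ?_) hM.1
    rw [hM.1.spectrum_real_eq_range_eigenvalues] at hx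
    obtain ⟨i, rfl⟩ := hx
    exact (Real.log_le_iff_le_exp (hM.eigenvalues_pos i)).1 (hbounds i).2
  constructor
  · simpa only [hS, hSS, hSMS] using star_left_conjugate_le_conjugate hlower S
  · simpa only [hS, hSS, hSMS] using star_left_conjugate_le_conjugate hupper S

lemma dotProduct_mulVec_pos_of_posDef (hP : P.PosDef) {x : Fin n → ℝ} (hx : x ≠ 0) :
    0 < x ⬝ᵥ P *ᵥ x := by
  simpa using hP.dotProduct_mulVec_pos hx

lemma dotProduct_mulVec_mono (h : P ≤ R) (x : Fin n → ℝ) : x ⬝ᵥ P *ᵥ x ≤ x ⬝ᵥ R *ᵥ x := by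
  simpa [sub_mulVec] using (Matrix.le_iff.1 h).dotProduct_mulVec_nonneg x

lemma abs_log_dotProduct_mulVec_sub_le_natDist (hP : P.PosDef) (hR : R.PosDef)
    {x : Fin n → ℝ} (hx : x ≠ 0) :
    |Real.log (x ⬝ᵥ P *ᵥ x) - Real.log (x ⬝ᵥ R *ᵥ x)| ≤ natDist P R := by
  obtain ⟨hlower, hupper⟩ := exp_neg_smul_le_and_le_exp_smul_of_natDist hP hR
  have hPx := dotProduct_mulVec_pos_of_posDef hP hx
  have hRx := dotProduct_mulVec_pos_of_posDef hR hx
  have hlogl := Real.log_le_log (by rw [smul_mulVec, dotProduct_smul, smul_eq_mul]; positivity)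
    (dotProduct_mulVec_mono hlower x)
  have hlogu := Real.log_le_log hPx (dotProduct_mulVec_mono hupper x)
  rw [smul_mulVec, dotProduct_smul, smul_eq_mul,
    Real.log_mul (Real.exp_pos _).ne' hRx.ne', Real.log_exp] at hlogl hlogu
  exact abs_le.2 ⟨by linarith, by linarith⟩

lemma abs_log_det_sub_le_natDist (hP : P.PosDef) (hR : R.PosDef) :
    |Real.log P.det - Real.log R.det| ≤ n * natDist P R := by
  have hM := posDef_inv_matSqrt_mul_mul_inv_matSqrt hP hR
  have hdet : ((matSqrt R)⁻¹ * P * (matSqrt R)⁻¹).det = P.det / R.det := by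
    conv_rhs => rw [← matSqrt_mul_matSqrt hR.posSemidef]
    simp only [det_mul, det_nonsing_inv, Ring.inverse_eq_inv']
    ring
  calc |Real.log P.det - Real.log R.det|
      = |∑ i, Real.log (hM.1.eigenvalues i)| := by
        rw [← Real.log_div hP.det_pos.ne' hR.det_pos.ne', ← hdet, hM.1.det_eq_prod_eigenvalues,
          ← Real.log_prod fun i _ => (hM.eigenvalues_pos i).ne']
        rfl
    _ ≤ ∑ i, |Real.log (hM.1.eigenvalues i)| := Finset.abs_sum_le_sum_abs _ _
    _ ≤ ∑ _ : Fin n, natDist P R :=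
        Finset.sum_le_sum fun i _ => abs_log_eigenvalues_le_natDist hP hR i
    _ = n * natDist P R := by simp

end NatDist

section LogCoords

open Function Topology

variable {n : ℕ}

lemma isClosed_posSemidef {m : Type*} [Finite m] : IsClosed {M : Matrix m m ℝ | M.PosSemidef} := by
  have := Fintype.ofFinite m
  have hset : {M : Matrix m m ℝ | M.PosSemidef} =
      {M | Mᴴ = M} ∩ ⋂ x : m → ℝ, {M | 0 ≤ star x ⬝ᵥ M *ᵥ x} := by
    ext M
    rw [Set.mem_inter_iff, Set.mem_iInter]
    exact posSemidef_iff_dotProduct_mulVec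
  rw [hset]
  exact (isClosed_eq (by fun_prop) continuous_id).inter
    (isClosed_iInter fun x => isClosed_le continuous_const (by fun_prop))

/-- The test vectors `eᵢ + eⱼ` (so `2 eᵢ` when `i = j`), on which the values of a quadratic form
determine its matrix by polarization. -/
def pairVec (i j : Fin n) : Fin n → ℝ := Pi.single i 1 + Pi.single j 1

lemma pairVec_ne_zero (i j : Fin n) : pairVec i j ≠ 0 := fun h => by
  have hi := congrFun h i
  have hj : (0 : ℝ) ≤ (Pi.single j 1 : Fin n → ℝ) i :=
    (Pi.single_nonneg.2 zero_le_one : (0 : Fin n → ℝ) ≤ Pi.single j 1) i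
  simp only [pairVec, Pi.add_apply, Pi.single_eq_same, Pi.zero_apply] at hi
  linarith

/-- Logarithmic coordinates of a positive definite matrix: the logarithms of its quadratic form
on the test vectors `pairVec i j` and of its determinant. The determinant is what makes the image
closed. -/
noncomputable def logCoords (P : PDMatrix n) : (Fin n → Fin n → ℝ) × ℝ :=
  (fun i j => Real.log (pairVec i j ⬝ᵥ P.1 *ᵥ pairVec i j), Real.log P.1.det)

/-- Recovers a symmetric matrix from the logarithms of its quadratic form on the test vectors, by
polarization; this is a left inverse of `logCoords`. -/
noncomputable def polarize (y : (Fin n → Fin n → ℝ) × ℝ) : Matrix (Fin n) (Fin n) ℝ :=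
  .of fun i j => (Real.exp (y.1 i j) - Real.exp (y.1 i i) / 4 - Real.exp (y.1 j j) / 4) / 2

lemma exp_logCoords_fst (P : PDMatrix n) (i j : Fin n) :
    Real.exp ((logCoords P).1 i j) = pairVec i j ⬝ᵥ P.1 *ᵥ pairVec i j :=
  Real.exp_log (dotProduct_mulVec_pos_of_posDef P.2 (pairVec_ne_zero i j))

lemma polarize_logCoords (P : PDMatrix n) : polarize (logCoords P) = P.1 := by
  ext i j
  have hsymm : P.1 j i = P.1 i j := by simpa using P.2.1.apply i j
  simp only [polarize, of_apply, exp_logCoords_fst, pairVec, mulVec_add, dotProduct_add,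
    add_dotProduct, mulVec_single_one, single_one_dotProduct, col_apply, hsymm]
  ring

lemma continuous_logCoords : Continuous (logCoords (n := n)) := by
  refine .prodMk (continuous_pi fun i => continuous_pi fun j => ?_) ?_
  · exact Continuous.log (by fun_prop) fun P =>
      (dotProduct_mulVec_pos_of_posDef P.2 (pairVec_ne_zero i j)).ne'
  · exact Continuous.log (by fun_prop) fun P => P.2.det_pos.ne'

lemma continuous_polarize : Continuous (polarize (n := n)) := by
  unfold polarize
  fun_prop

lemma range_logCoords : Set.range (logCoords (n := n)) =
    {y | (polarize y).PosSemidef ∧ (polarize y).det = Real.exp y.2 ∧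
      ∀ i j, pairVec i j ⬝ᵥ polarize y *ᵥ pairVec i j = Real.exp (y.1 i j)} := by
  ext y
  constructor
  · rintro ⟨P, rfl⟩
    refine ⟨?_, ?_, fun i j => ?_⟩
    · exact polarize_logCoords P ▸ P.2.posSemidef
    · rw [polarize_logCoords, logCoords, Real.exp_log P.2.det_pos]
    · rw [polarize_logCoords, exp_logCoords_fst]
  · rintro ⟨hpsd, hdet, hquad⟩
    have hpd := hpsd.posDef_iff_det_ne_zero.2 (hdet ▸ (Real.exp_pos _).ne')
    refine ⟨⟨polarize y, hpd⟩, ?_⟩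
    simp only [logCoords, hquad, hdet, Real.log_exp]

lemma isClosed_range_logCoords : IsClosed (Set.range (logCoords (n := n))) := by
  have hpol := continuous_polarize (n := n)
  have hquad : IsClosed {y : (Fin n → Fin n → ℝ) × ℝ |
      ∀ i j, pairVec i j ⬝ᵥ polarize y *ᵥ pairVec i j = Real.exp (y.1 i j)} := by
    simp only [Set.ofPred_forall]
    exact isClosed_iInter fun i => isClosed_iInter fun j =>
      isClosed_eq (by fun_prop) (by fun_prop)
  rw [range_logCoords]
  exact (isClosed_posSemidef.preimage hpol).inter
    ((isClosed_eq (by fun_prop) (by fun_prop)).inter hquad)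

lemma isClosedEmbedding_logCoords : IsClosedEmbedding (logCoords (n := n)) where
  toIsEmbedding := by
    refine .of_comp continuous_logCoords continuous_polarize ?_
    have hcomp : polarize ∘ logCoords (n := n) = Subtype.val := funext polarize_logCoords
    exact hcomp ▸ .subtypeVal
  isClosed_range := isClosed_range_logCoords

lemma dist_logCoords_le (P R : PDMatrix n) :
    dist (logCoords P) (logCoords R) ≤ (max 1 n : NNReal) * natDist P.1 R.1 := by
  have hnonneg : 0 ≤ natDist P.1 R.1 := Real.sqrt_nonneg _
  push_cast
  refine max_le ?_ ?_
  · refine le_trans ?_ (le_mul_of_one_le_left hnonneg (le_max_left 1 _))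
    exact (dist_pi_le_iff hnonneg).2 fun i => (dist_pi_le_iff hnonneg).2 fun j =>
      abs_log_dotProduct_mulVec_sub_le_natDist P.2 R.2 (pairVec_ne_zero i j)
  · exact (abs_log_det_sub_le_natDist P.2 R.2).trans
      (mul_le_mul_of_nonneg_right (le_max_right 1 _) hnonneg)

/-- The metric pulled back along `logCoords`. It induces the subspace topology, is proper, and is
dominated by a multiple of `natDist`. -/
noncomputable abbrev logCoordsMetric (n : ℕ) : MetricSpace (PDMatrix n) :=
  isClosedEmbedding_logCoords.toIsEmbedding.comapMetricSpace logCoords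

lemma properSpace_of_isometry_of_isClosedEmbedding {X Y : Type*} [PseudoMetricSpace X]
    [PseudoMetricSpace Y] [ProperSpace Y] {f : X → Y} (hf : Isometry f)
    (hclosed : IsClosedEmbedding f) : ProperSpace X where
  isCompact_closedBall x r := by
    rw [← hf.preimage_closedBall]
    exact hclosed.isCompact_preimage (isCompact_closedBall (f x) r)

lemma properSpace_logCoordsMetric (n : ℕ) :
    @ProperSpace (PDMatrix n) (logCoordsMetric n).toPseudoMetricSpace :=
  @properSpace_of_isometry_of_isClosedEmbedding _ _ (logCoordsMetric n).toPseudoMetricSpace _ _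
    logCoords (@Isometry.of_dist_eq _ _ (logCoordsMetric n).toPseudoMetricSpace _ _
      fun _ _ => rfl) isClosedEmbedding_logCoords

theorem exists_unique_attracting_isFixedPt_ifsMarkovOp_of_natDist {ι : Type*} [Fintype ι]
    {p : ι → ℝ} (hp : p ∈ stdSimplex ℝ ι) (f : ι → C(PDMatrix n, PDMatrix n))
    (hne : ∀ i P R, natDist (f i P).1 (f i R).1 ≤ natDist P.1 R.1) {i₀ : ι} (hi₀ : 0 < p i₀)
    {m : ℕ} (hm : m ≠ 0) {ρ : ℝ} (hρ₀ : 0 ≤ ρ) (hρ₁ : ρ < 1)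
    (hcontr : ∀ P R, natDist ((f i₀)^[m] P).1 ((f i₀)^[m] R).1 ≤ ρ * natDist P.1 R.1) :
    ∃ μ : ProbabilityMeasure (PDMatrix n), IsFixedPt (ifsMarkovOp hp f) μ ∧
      (∀ ν, IsFixedPt (ifsMarkovOp hp f) ν → ν = μ) ∧
      ∀ ν, Tendsto (fun k => (ifsMarkovOp hp f)^[k] ν) atTop (𝓝 μ) :=
  letI := logCoordsMetric n
  haveI := properSpace_logCoordsMetric n
  haveI : Nonempty (PDMatrix n) := ⟨1, PosDef.one⟩
  exists_unique_attracting_isFixedPt_ifsMarkovOp hp f dist_logCoords_le hne hi₀ hm hρ₀ hρ₁ hcontr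

end LogCoords

section Riccati

open Function

variable {n : ℕ} {A Q I : Matrix (Fin n) (Fin n) ℝ} (hA : IsUnit A.det) (hQ : Q.PosSemidef)
  (hI : I.PosSemidef)

lemma continuous_riccatiHPD : Continuous (riccatiHPD A Q hA hQ) := by
  unfold riccatiHPD riccatiH
  fun_prop

lemma continuous_inv_of_posDef {X : Type*} [TopologicalSpace X] {f : X → Matrix (Fin n) (Fin n) ℝ}
    (hf : Continuous f) (hpos : ∀ x, (f x).PosDef) : Continuous fun x => (f x)⁻¹ :=
  continuous_iff_continuousAt.2 fun x => by
    refine ContinuousAt.comp (f := f) (continuousAt_matrix_inv (f x) ?_) hf.continuousAt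
    simpa only [Ring.inverse_eq_inv'] using continuousAt_inv₀ (hpos x).det_pos.ne'

lemma continuous_riccatiGPD : Continuous (riccatiGPD A Q I hA hQ hI) := by
  have hcont : Continuous fun P : PDMatrix n => (riccatiH A Q P.1)⁻¹ + I :=
    (continuous_inv_of_posDef (continuous_riccatiHPD hA hQ).subtype_val
      fun P => riccatiH_posDef hA hQ P.2).add continuous_const
  exact (continuous_inv_of_posDef hcont
    fun P => (riccatiH_posDef hA hQ P.2).inv.add_posSemidef hI).subtype_mk _

/-- The iterated function system of the filter: `g` at index `0` (a measurement arrives) and `h` at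
index `1` (it is lost). -/
noncomputable def riccatiMaps (i : Fin 2) : C(PDMatrix n, PDMatrix n) :=
  ![⟨_, continuous_riccatiGPD hA hQ hI⟩, ⟨_, continuous_riccatiHPD hA hQ⟩] i

lemma coe_iterate_riccatiMaps_zero (m : ℕ) (P : PDMatrix n) :
    ((riccatiMaps hA hQ hI 0)^[m] P).1 = (riccatiG A Q I)^[m] P.1 :=
  (Semiconj.iterate_right (f := Subtype.val) (fun _ => rfl) m).eq P

variable {γ : ℝ}

lemma bernoulli_mem_stdSimplex (hγ : γ ∈ Set.Icc (0 : ℝ) 1) :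
    ![γ, 1 - γ] ∈ stdSimplex ℝ (Fin 2) := by
  simpa [stdSimplex, Fin.forall_fin_two] using hγ

lemma coe_ifsMarkovOp_riccatiMaps (hp : ![γ, 1 - γ] ∈ stdSimplex ℝ (Fin 2))
    (ν : ProbabilityMeasure (PDMatrix n)) :
    (ifsMarkovOp hp (riccatiMaps hA hQ hI) ν : Measure (PDMatrix n)) =
      lgbMarkovOp A Q I hA hQ hI γ ν := by
  simp only [ifsMarkovOp, ProbabilityMeasure.coe_mk, Fin.sum_univ_two]
  rfl

lemma coe_iterate_ifsMarkovOp_riccatiMaps (hp : ![γ, 1 - γ] ∈ stdSimplex ℝ (Fin 2)) (k : ℕ)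
    (ν : ProbabilityMeasure (PDMatrix n)) :
    ((ifsMarkovOp hp (riccatiMaps hA hQ hI))^[k] ν : Measure (PDMatrix n)) =
      (lgbMarkovOp A Q I hA hQ hI γ)^[k] ν :=
  (Semiconj.iterate_right (f := ((↑) : ProbabilityMeasure (PDMatrix n) → Measure (PDMatrix n)))
    (coe_ifsMarkovOp_riccatiMaps hA hQ hI hp) k).eq ν

end Riccati

/-- If some iterate `g^{∘m}` (`m ≥ 1`) is a strict
`ρ`-contraction (`ρ < 1`) for the natural distance `d` and `g`, `h` are
nonexpansive for `d`, then for every arrival probability `γ̄ ∈ (0,1)` the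
Markov operator `T(ν) = γ̄·g_*ν + (1−γ̄)·h_*ν` on Borel probability measures
on the positive definite matrices has a unique invariant probability measure,
and the iterates `T^k(ν)` converge weakly to it from any initial Borel
probability measure `ν`. -/
theorem lgb_stationary_distribution_exists
    {n : ℕ} (hn : 1 ≤ n) (A Q I : Matrix (Fin n) (Fin n) ℝ)
    (hA : IsUnit A.det) (hQ : Q.PosSemidef) (hI : I.PosSemidef)
    (m : ℕ) (hm : 1 ≤ m) (ρ : ℝ) (hρ₀ : 0 ≤ ρ) (hρ₁ : ρ < 1)
    (hcontr : ∀ P₁ P₂ : Matrix (Fin n) (Fin n) ℝ, P₁.PosDef → P₂.PosDef →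
      natDist ((riccatiG A Q I)^[m] P₁) ((riccatiG A Q I)^[m] P₂)
        ≤ ρ * natDist P₁ P₂)
    (hgne : ∀ P₁ P₂ : Matrix (Fin n) (Fin n) ℝ, P₁.PosDef → P₂.PosDef →
      natDist (riccatiG A Q I P₁) (riccatiG A Q I P₂) ≤ natDist P₁ P₂)
    (hhne : ∀ P₁ P₂ : Matrix (Fin n) (Fin n) ℝ, P₁.PosDef → P₂.PosDef →
      natDist (riccatiH A Q P₁) (riccatiH A Q P₂) ≤ natDist P₁ P₂)
    (γ : ℝ) (hγ : γ ∈ Set.Ioo (0 : ℝ) 1) :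
    ∃ μ : Measure (PDMatrix n), IsProbabilityMeasure μ ∧
      lgbMarkovOp A Q I hA hQ hI γ μ = μ ∧
      (∀ μ' : Measure (PDMatrix n), IsProbabilityMeasure μ' →
        lgbMarkovOp A Q I hA hQ hI γ μ' = μ' → μ' = μ) ∧
      (∀ ν : Measure (PDMatrix n), IsProbabilityMeasure ν →
        ∀ φ : BoundedContinuousFunction (PDMatrix n) ℝ,
          Tendsto
            (fun k : ℕ => ∫ x, φ x ∂((lgbMarkovOp A Q I hA hQ hI γ)^[k] ν))
            atTop (nhds (∫ x, φ x ∂μ))) := by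
  have hp : ![γ, 1 - γ] ∈ stdSimplex ℝ (Fin 2) :=
    bernoulli_mem_stdSimplex (Set.Ioo_subset_Icc_self hγ)
  have hne : ∀ i (P R : PDMatrix n), natDist (riccatiMaps hA hQ hI i P).1
      (riccatiMaps hA hQ hI i R).1 ≤ natDist P.1 R.1 :=
    Fin.forall_fin_two.2 ⟨fun P R => hgne P.1 R.1 P.2 R.2, fun P R => hhne P.1 R.1 P.2 R.2⟩
  have hcontrPD (P R : PDMatrix n) : natDist ((riccatiMaps hA hQ hI 0)^[m] P).1
      ((riccatiMaps hA hQ hI 0)^[m] R).1 ≤ ρ * natDist P.1 R.1 := by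
    simpa only [← coe_iterate_riccatiMaps_zero hA hQ hI] using hcontr P.1 R.1 P.2 R.2
  obtain ⟨μ, hfix, huniq, hlim⟩ := exists_unique_attracting_isFixedPt_ifsMarkovOp_of_natDist hp
    (riccatiMaps hA hQ hI) hne (i₀ := 0) hγ.1 (by omega) hρ₀ hρ₁ hcontrPD
  refine ⟨μ, inferInstance, ?_, fun μ' hprob hμ' => ?_, fun ν hprob φ => ?_⟩
  · rw [← coe_ifsMarkovOp_riccatiMaps hA hQ hI hp, hfix]
  · have hfix' := (coe_ifsMarkovOp_riccatiMaps hA hQ hI hp ⟨μ', hprob⟩).trans hμ'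
    exact congrArg Subtype.val (huniq ⟨μ', hprob⟩ (Subtype.ext hfix'))
  · have hlimφ := ProbabilityMeasure.tendsto_iff_forall_integral_tendsto.1 (hlim ⟨ν, hprob⟩) φ
    exact hlimφ.congr fun k => congrArg (∫ x, φ x ∂·)
      (coe_iterate_ifsMarkovOp_riccatiMaps hA hQ hI hp k ⟨ν, hprob⟩)
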